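/- arXiv:1106.4714 — 2 statements merged into one kernel-verified Lean document; each statement's English description precedes it below -/
import Mathlib

section
/- Let t ↦ 𝐜(t) be a differentiable curve in M_N([0,∞)). Then for every β ≥ 0, d/dt p_N(β,𝐜(t)) = (1/(2N²)) Σ_{i,j=1}^N (dc_{ij}/dt) · 𝔼_{N,𝐜(t)}[ ln( 1 − (1−e^{−β}) ⟨δ(σ_i,σ_j)⟩_{N,βJ} ) ]. -/
open MeasureTheory Filter

/-- Poisson probability mass function with parameter `lam`. -/
noncomputable def poissonPMF (lam : ℝ) (k : ℕ) : ℝ :=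
  Real.exp (-lam) * lam ^ k / (Nat.factorial k)

/-- Potts Hamiltonian `H_N(σ, J) = Σ_{i,j} J_{ij} δ(σ_i, σ_j)`. -/
noncomputable def potts.H (q N : ℕ) (σ : Fin N → Fin q) (J : Fin N → Fin N → ℝ) : ℝ :=
  ∑ i, ∑ j, J i j * (if σ i = σ j then (1 : ℝ) else 0)

/-- Partition function `Z_N(J)`. -/
noncomputable def potts.Z (q N : ℕ) (J : Fin N → Fin N → ℝ) : ℝ :=
  ∑ σ : Fin N → Fin q, Real.exp (- potts.H q N σ J)

/-- Expectation over the Poissonian disorder: the entries `J_{ij}` are independent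
Poisson random variables with means `c_{ij} / (2N)`. -/
noncomputable def potts.E (N : ℕ) (c : Fin N → Fin N → ℝ)
    (g : (Fin N → Fin N → ℕ) → ℝ) : ℝ :=
  ∑' J : Fin N → Fin N → ℕ,
    (∏ i, ∏ j, poissonPMF (c i j / (2 * N)) (J i j)) * g J

/-- Quenched pressure for a general nonnegative connectivity matrix `c`. -/
noncomputable def potts.pmat (q N : ℕ) (β : ℝ) (c : Fin N → Fin N → ℝ) : ℝ :=
  potts.E N c (fun J => (1 / N) * Real.log (potts.Z q N (fun i j => β * (J i j : ℝ))))

/-- Quenched pressure for the constant connectivity matrix `c_{ij} ≡ c`. -/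
noncomputable def potts.p (q N : ℕ) (β c : ℝ) : ℝ :=
  potts.pmat q N β (fun _ _ => c)

/-- Annealed pressure `𝒫(β, c) = ln q + (c/2) ln(1 - (1 - e^{-β})/q)`. -/
noncomputable def potts.annealed (q : ℕ) (β c : ℝ) : ℝ :=
  Real.log q + (c / 2) * Real.log (1 - (1 - Real.exp (-β)) / q)

/-- Gibbs expectation `⟨f⟩_{N,J}`. -/
noncomputable def potts.gibbsAvg (q N : ℕ) (J : Fin N → Fin N → ℝ)
    (f : (Fin N → Fin q) → ℝ) : ℝ :=
  (∑ σ : Fin N → Fin q, f σ * Real.exp (- potts.H q N σ J)) / potts.Z q N J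

/-!
For a finite family of independent Poisson variables `J` with means `x`, the expectation of `g` is
a power series in `x` times `exp (-∑ x)`. Since `∂/∂λ P_λ(k) = P_λ(k - 1) - P_λ(k)`,
differentiating it term by term and reindexing gives `∂ₑ 𝔼ₓ[g] = 𝔼ₓ[g(J + δₑ) - g(J)]` as soon as
`g` grows at most exponentially. The function `ln Z(βJ)` grows only linearly in `J`, and raising
`J i j` by one multiplies the Gibbs weight of `σ` by `e^{-β}` exactly when `σ i = σ j`, so it
multiplies `Z(βJ)` by `1 - (1 - e^{-β}) ⟨δ(σ i, σ j)⟩`.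
-/

lemma summable_prod_pi {ι 𝕜 : Type*} [Fintype ι] [RCLike 𝕜] {κ : ι → Type*}
    [∀ a, Countable (κ a)] {f : ∀ a, κ a → 𝕜} (hf : ∀ a, Summable (f a)) :
    Summable fun J : ∀ a, κ a => ∏ a, f a (J a) := by
  let _ : ∀ a, MeasurableSpace (κ a) := fun _ => ⊤
  have pi_count : Measure.pi (fun a => (Measure.count : Measure (κ a))) = Measure.count :=
    Measure.ext_of_singleton fun J => by simp
  rw [← summable_norm_iff, ← integrable_count_iff, ← pi_count]
  exact Integrable.fintype_prod_dep fun a => integrable_count_iff.mpr (hf a).norm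

lemma tsum_add_single_of_eq_zero {ι α : Type*} [DecidableEq ι] [AddCommMonoid α]
    [TopologicalSpace α] {F : (ι → ℕ) → α} (e : ι) (hF : ∀ J, J e = 0 → F J = 0) :
    ∑' J : ι → ℕ, F (J + Pi.single e 1) = ∑' J, F J := by
  refine (add_left_injective (Pi.single e 1 : ι → ℕ)).tsum_eq fun J hJ => ?_
  have single_le : Pi.single e 1 ≤ J :=
    update_le_iff.mpr ⟨Nat.one_le_iff_ne_zero.mpr fun h => hJ (hF J h), fun _ _ => Nat.zero_le _⟩
  exact ⟨J - Pi.single e 1, tsub_add_cancel_of_le single_le⟩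

lemma norm_sum_smul_proj_le {ι : Type*} [Fintype ι] (v : ι → ℝ) :
    ‖∑ e, v e • (ContinuousLinearMap.proj e : (ι → ℝ) →L[ℝ] ℝ)‖ ≤ ∑ e, |v e| := by
  refine ContinuousLinearMap.opNorm_le_bound _ (by positivity) fun y => ?_
  simp only [sum_apply, smul_apply, ContinuousLinearMap.proj_apply, smul_eq_mul, Finset.sum_mul]
  refine (norm_sum_le _ _).trans (Finset.sum_le_sum fun e _ => ?_)
  rw [norm_mul, Real.norm_eq_abs]
  gcongr
  exact norm_le_pi_norm y e

/-! ### Poisson weights -/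

/-- The derivative `P_lam(k - 1) - P_lam(k)` of the Poisson mass at `k` with respect to the
parameter `lam`, where `P_lam(-1) = 0`. -/
noncomputable def poissonPMFDeriv (lam : ℝ) : ℕ → ℝ
  | 0 => -poissonPMF lam 0
  | k + 1 => poissonPMF lam k - poissonPMF lam (k + 1)

lemma hasDerivAt_poissonPMF (lam : ℝ) (k : ℕ) :
    HasDerivAt (fun y => poissonPMF y k) (poissonPMFDeriv lam k) lam := by
  have h := ((hasDerivAt_neg lam).exp.mul (hasDerivAt_pow k lam)).div_const (k.factorial : ℝ)
  refine h.congr_deriv ?_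
  cases k with
  | zero => simp [poissonPMFDeriv, poissonPMF]
  | succ k =>
    simp only [poissonPMFDeriv, poissonPMF, Nat.factorial_succ, Nat.cast_mul, Nat.cast_succ,
      Nat.add_sub_cancel]
    field_simp
    ring

lemma abs_poissonPMF_le {R lam : ℝ} (h : |lam| ≤ R) (k : ℕ) :
    |poissonPMF lam k| ≤ Real.exp R * R ^ k / k.factorial := by
  rw [poissonPMF, abs_div, abs_mul, abs_pow, Real.abs_exp, Nat.abs_cast]
  gcongr
  exact (neg_le_abs lam).trans h

lemma abs_poissonPMF_le_add_one {R lam : ℝ} (h : |lam| ≤ R) (k : ℕ) :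
    |poissonPMF lam k| ≤ Real.exp R * (R + 1) ^ k / k.factorial := by
  have hR : 0 ≤ R := (abs_nonneg lam).trans h
  refine (abs_poissonPMF_le h k).trans ?_
  gcongr
  linarith

lemma abs_poissonPMFDeriv_le {R lam : ℝ} (h : |lam| ≤ R) (k : ℕ) :
    |poissonPMFDeriv lam k| ≤ Real.exp R * (R + 1) ^ k / k.factorial := by
  have hR : 0 ≤ R := (abs_nonneg lam).trans h
  cases k with
  | zero => simpa [poissonPMFDeriv] using abs_poissonPMF_le h 0
  | succ k =>
    have bernoulli : R ^ (k + 1) + (k + 1) * R ^ k ≤ (R + 1) ^ (k + 1) := by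
      simpa using pow_add_mul_le_add_pow hR (b := 1) (by linarith) (k + 1)
    calc |poissonPMFDeriv lam (k + 1)|
        ≤ |poissonPMF lam k| + |poissonPMF lam (k + 1)| := abs_sub _ _
      _ ≤ Real.exp R * R ^ k / k.factorial + Real.exp R * R ^ (k + 1) / (k + 1).factorial :=
        add_le_add (abs_poissonPMF_le h k) (abs_poissonPMF_le h (k + 1))
      _ = Real.exp R * (R ^ (k + 1) + (k + 1) * R ^ k) / (k + 1).factorial := by
        rw [Nat.factorial_succ, Nat.cast_mul, Nat.cast_succ]
        field_simp
        ring
      _ ≤ Real.exp R * (R + 1) ^ (k + 1) / (k + 1).factorial := by gcongr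

section PoissonFamily

variable {ι : Type*} [Fintype ι]

/-- The joint mass function of independent Poisson variables with means `x a`. -/
noncomputable def poissonWeight (x : ι → ℝ) (J : ι → ℕ) : ℝ :=
  ∏ a, poissonPMF (x a) (J a)

/-- The partial derivative of `poissonWeight x J` with respect to `x e`. -/
noncomputable def poissonWeightPartial [DecidableEq ι] (x : ι → ℝ) (e : ι) (J : ι → ℕ) : ℝ :=
  (∏ a ∈ Finset.univ.erase e, poissonPMF (x a) (J a)) * poissonPMFDeriv (x e) (J e)

/-- A common bound for the Poisson weights and their partial derivatives on the cube
`∀ a, |x a| ≤ R`. -/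
noncomputable def poissonMajorant (R : ℝ) (J : ι → ℕ) : ℝ :=
  ∏ a, Real.exp R * (R + 1) ^ J a / (J a).factorial

/-- The expectation of `g J` when the `J a` are independent Poisson variables with means `x a`. -/
noncomputable def poissonExpectation (x : ι → ℝ) (g : (ι → ℕ) → ℝ) : ℝ :=
  ∑' J, poissonWeight x J * g J

/-- At most exponential growth of `g J` in the total number `∑ a, J a`. -/
def HasExpGrowth (g : (ι → ℕ) → ℝ) : Prop :=
  ∃ C r : ℝ, ∀ J, |g J| ≤ C * r ^ ∑ a, J a

lemma HasExpGrowth.of_abs_le_add_mul_sum {g : (ι → ℕ) → ℝ} {A B : ℝ} (hA : 0 ≤ A) (hB : 0 ≤ B)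
    (hg : ∀ J, |g J| ≤ A + B * ∑ a, (J a : ℝ)) : HasExpGrowth g := by
  refine ⟨A + B, 2, fun J => (hg J).trans ?_⟩
  have one_le : (1 : ℝ) ≤ 2 ^ ∑ a, J a := one_le_pow₀ one_le_two
  have sum_le : ∑ a, (J a : ℝ) ≤ 2 ^ ∑ a, J a := by
    exact_mod_cast (Nat.lt_two_pow_self (n := ∑ a, J a)).le
  rw [add_mul]
  gcongr
  exact le_mul_of_one_le_right hA one_le

lemma HasExpGrowth.add_single [DecidableEq ι] {g : (ι → ℕ) → ℝ} (hg : HasExpGrowth g) (e : ι) :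
    HasExpGrowth fun J => g (J + Pi.single e 1) := by
  obtain ⟨C, r, h⟩ := hg
  refine ⟨C * r, r, fun J => (h _).trans_eq ?_⟩
  have sum_add_single : ∑ a, (J + Pi.single e 1 : ι → ℕ) a = ∑ a, J a + 1 := by
    simp [Finset.sum_add_distrib]
  rw [sum_add_single, pow_succ']
  ring

lemma poissonMajorant_nonneg {R : ℝ} (hR : 0 ≤ R) (J : ι → ℕ) : 0 ≤ poissonMajorant R J :=
  Finset.prod_nonneg fun _ _ => by positivity

lemma abs_poissonWeight_le {R : ℝ} {x : ι → ℝ} (hx : ∀ a, |x a| ≤ R) (J : ι → ℕ) :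
    |poissonWeight x J| ≤ poissonMajorant R J := by
  rw [poissonWeight, Finset.abs_prod]
  exact Finset.prod_le_prod (fun _ _ => abs_nonneg _)
    fun a _ => abs_poissonPMF_le_add_one (hx a) (J a)

lemma abs_poissonWeightPartial_le [DecidableEq ι] {R : ℝ} {x : ι → ℝ} (hx : ∀ a, |x a| ≤ R)
    (e : ι) (J : ι → ℕ) : |poissonWeightPartial x e J| ≤ poissonMajorant R J := by
  have hR : 0 ≤ R := (abs_nonneg _).trans (hx e)
  rw [poissonWeightPartial, poissonMajorant, ← Finset.prod_erase_mul _ _ (Finset.mem_univ e),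
    abs_mul, Finset.abs_prod]
  gcongr with a
  · exact abs_poissonPMF_le_add_one (hx a) (J a)
  · exact abs_poissonPMFDeriv_le (hx e) (J e)

lemma summable_poissonMajorant_mul {g : (ι → ℕ) → ℝ} (hg : HasExpGrowth g) {R : ℝ} (hR : 0 ≤ R) :
    Summable fun J : ι → ℕ => poissonMajorant R J * |g J| := by
  obtain ⟨C, r, h⟩ := hg
  have summable_factor :
      Summable fun k : ℕ => Real.exp R * (((R + 1) * r) ^ k / k.factorial) :=
    (Real.summable_pow_div_factorial _).mul_left _
  have summable_bound := (summable_prod_pi fun _ : ι => summable_factor).mul_left C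
  refine Summable.of_nonneg_of_le
    (fun J => mul_nonneg (poissonMajorant_nonneg hR J) (abs_nonneg _)) (fun J => ?_) summable_bound
  calc poissonMajorant R J * |g J|
      ≤ poissonMajorant R J * (C * r ^ ∑ a, J a) :=
        mul_le_mul_of_nonneg_left (h J) (poissonMajorant_nonneg hR J)
    _ = C * ∏ a, Real.exp R * (((R + 1) * r) ^ J a / (J a).factorial) := by
        rw [poissonMajorant, ← Finset.prod_pow_eq_pow_sum, mul_left_comm,
          ← Finset.prod_mul_distrib]
        congr! 2 with a
        rw [mul_pow]
        ring

lemma summable_poissonWeight_mul {g : (ι → ℕ) → ℝ} (hg : HasExpGrowth g) (x : ι → ℝ) :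
    Summable fun J => poissonWeight x J * g J := by
  refine Summable.of_norm_bounded (summable_poissonMajorant_mul hg (norm_nonneg x)) fun J => ?_
  rw [Real.norm_eq_abs, abs_mul]
  gcongr
  exact abs_poissonWeight_le (norm_le_pi_norm x) J

lemma summable_poissonWeightPartial_mul [DecidableEq ι] {g : (ι → ℕ) → ℝ} (hg : HasExpGrowth g)
    (x : ι → ℝ) (e : ι) : Summable fun J => poissonWeightPartial x e J * g J := by
  refine Summable.of_norm_bounded (summable_poissonMajorant_mul hg (norm_nonneg x)) fun J => ?_
  rw [Real.norm_eq_abs, abs_mul]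
  gcongr
  exact abs_poissonWeightPartial_le (norm_le_pi_norm x) e J

/-! ### Differentiating Poisson expectations -/

variable [DecidableEq ι]

lemma poissonWeightPartial_add_poissonWeight_of_eq_zero (x : ι → ℝ) {e : ι} {J : ι → ℕ}
    (h : J e = 0) : poissonWeightPartial x e J + poissonWeight x J = 0 := by
  rw [poissonWeight, poissonWeightPartial, ← Finset.prod_erase_mul _ _ (Finset.mem_univ e), h,
    poissonPMFDeriv]
  ring

lemma poissonWeightPartial_add_poissonWeight_add_single (x : ι → ℝ) (e : ι) (J : ι → ℕ) :
    poissonWeightPartial x e (J + Pi.single e 1) + poissonWeight x (J + Pi.single e 1) =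
      poissonWeight x J := by
  have prod_erase_eq : ∏ a ∈ Finset.univ.erase e, poissonPMF (x a) ((J + Pi.single e 1 : ι → ℕ) a) =
      ∏ a ∈ Finset.univ.erase e, poissonPMF (x a) (J a) :=
    Finset.prod_congr rfl fun a ha => by simp [Finset.ne_of_mem_erase ha]
  simp only [poissonWeight, poissonWeightPartial,
    ← Finset.prod_erase_mul _ _ (Finset.mem_univ e), prod_erase_eq]
  simp only [Pi.add_apply, Pi.single_eq_same, poissonPMFDeriv]
  ring

lemma tsum_poissonWeightPartial_mul {g : (ι → ℕ) → ℝ} (hg : HasExpGrowth g) (x : ι → ℝ) (e : ι) :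
    ∑' J, poissonWeightPartial x e J * g J =
      poissonExpectation x fun J => g (J + Pi.single e 1) - g J := by
  have hw := summable_poissonWeight_mul hg x
  have hshift := summable_poissonWeight_mul (hg.add_single e) x
  have reindex : ∑' J, poissonWeight x J * g (J + Pi.single e 1) =
      ∑' J, (poissonWeightPartial x e J + poissonWeight x J) * g J := by
    refine Eq.trans ?_ (tsum_add_single_of_eq_zero e fun J hJ => by
      rw [poissonWeightPartial_add_poissonWeight_of_eq_zero x hJ, zero_mul])
    simp only [poissonWeightPartial_add_poissonWeight_add_single]
  simp only [poissonExpectation, mul_sub]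
  rw [hshift.tsum_sub hw, reindex]
  simp only [add_mul]
  rw [(summable_poissonWeightPartial_mul hg x e).tsum_add hw, add_sub_cancel_right]

lemma hasFDerivAt_poissonWeight (J : ι → ℕ) (x : ι → ℝ) :
    HasFDerivAt (fun y => poissonWeight y J)
      (∑ e, poissonWeightPartial x e J • (ContinuousLinearMap.proj e : (ι → ℝ) →L[ℝ] ℝ)) x := by
  simp only [poissonWeightPartial, mul_smul]
  refine HasFDerivAt.finsetProd fun e _ => ?_
  exact HasDerivAt.comp_hasFDerivAt (f := fun y : ι → ℝ => y e) x
    (hasDerivAt_poissonPMF (x e) (J e)) (hasFDerivAt_apply e x)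

theorem hasFDerivAt_poissonExpectation {g : (ι → ℕ) → ℝ} (hg : HasExpGrowth g) (x : ι → ℝ) :
    HasFDerivAt (fun y => poissonExpectation y g)
      (∑ e, poissonExpectation x (fun J => g (J + Pi.single e 1) - g J) •
        (ContinuousLinearMap.proj e : (ι → ℝ) →L[ℝ] ℝ)) x := by
  set R : ℝ := ‖x‖ + 1
  have summable_bound : Summable fun J : ι → ℕ => ∑ _e : ι, poissonMajorant R J * |g J| :=
    summable_sum fun _ _ => summable_poissonMajorant_mul hg (by positivity)
  have hasFDerivAt_term (J : ι → ℕ) (y : ι → ℝ) :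
      HasFDerivAt (fun y => poissonWeight y J * g J) (∑ e, (poissonWeightPartial y e J * g J) •
        (ContinuousLinearMap.proj e : (ι → ℝ) →L[ℝ] ℝ)) y := by
    refine ((hasFDerivAt_poissonWeight J y).mul_const (g J)).congr_fderiv ?_
    simp only [Finset.smul_sum, smul_smul, mul_comm]
  have norm_fderiv_le (J : ι → ℕ) (y : ι → ℝ) (hy : y ∈ Metric.ball 0 R) :
      ‖∑ e, (poissonWeightPartial y e J * g J) •
        (ContinuousLinearMap.proj e : (ι → ℝ) →L[ℝ] ℝ)‖ ≤
        ∑ _e : ι, poissonMajorant R J * |g J| := by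
    have hyR (a : ι) : |y a| ≤ R := (norm_le_pi_norm y a).trans (mem_ball_zero_iff.mp hy).le
    refine (norm_sum_smul_proj_le _).trans (Finset.sum_le_sum fun e _ => ?_)
    rw [abs_mul]
    gcongr
    exact abs_poissonWeightPartial_le hyR e J
  have hx : x ∈ Metric.ball 0 R := mem_ball_zero_iff.mpr (lt_add_one _)
  refine (hasFDerivAt_tsum_of_isPreconnected summable_bound Metric.isOpen_ball
    (convex_ball 0 R).isPreconnected (fun J y _ => hasFDerivAt_term J y) norm_fderiv_le hx
    (summable_poissonWeight_mul hg x) hx).congr_fderiv ?_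
  simp only [← tsum_poissonWeightPartial_mul hg]
  exact (hasSum_sum fun e _ =>
    (summable_poissonWeightPartial_mul hg x e).hasSum.smul_const _).tsum_eq

lemma hasDerivAt_poissonExpectation_comp {g : (ι → ℕ) → ℝ} (hg : HasExpGrowth g)
    {x : ℝ → ι → ℝ} {x' : ι → ℝ} {t : ℝ} (hx : HasDerivAt x x' t) :
    HasDerivAt (fun s => poissonExpectation (x s) g)
      (∑ e, x' e * poissonExpectation (x t) fun J => g (J + Pi.single e 1) - g J) t := by
  refine ((hasFDerivAt_poissonExpectation hg (x t)).comp_hasDerivAt t hx).congr_deriv ?_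
  simp [mul_comm]

end PoissonFamily

/-! ### The Potts model -/

namespace potts

variable {q N : ℕ}

lemma E_eq_poissonExpectation (c : Fin N → Fin N → ℝ) (g : (Fin N → Fin N → ℕ) → ℝ) :
    E N c g = poissonExpectation (fun a : Fin N × Fin N => c a.1 a.2 / (2 * N))
      fun J => g (Function.curry J) := by
  rw [E, ← (Equiv.curry (Fin N) (Fin N) ℕ).tsum_eq]
  simp only [poissonExpectation, poissonWeight, Fintype.prod_prod_type]
  rfl

lemma pmat_eq_poissonExpectation (β : ℝ) (c : Fin N → Fin N → ℝ) :
    pmat q N β c = 1 / N * poissonExpectation (fun a : Fin N × Fin N => c a.1 a.2 / (2 * N))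
      fun J => Real.log (Z q N fun i j => β * (J (i, j) : ℝ)) := by
  rw [pmat, E_eq_poissonExpectation, poissonExpectation, poissonExpectation, ← tsum_mul_left]
  simp only [mul_left_comm, Function.curry]

lemma Z_pos (hq : q ≠ 0) (J : Fin N → Fin N → ℝ) : 0 < Z q N J := by
  have : NeZero q := ⟨hq⟩
  exact Finset.sum_pos (fun _ _ => Real.exp_pos _) Finset.univ_nonempty

lemma abs_H_le (σ : Fin N → Fin q) (J : Fin N → Fin N → ℝ) :
    |H q N σ J| ≤ ∑ i, ∑ j, |J i j| := by
  refine (Finset.abs_sum_le_sum_abs _ _).trans (Finset.sum_le_sum fun i _ => ?_)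
  refine (Finset.abs_sum_le_sum_abs _ _).trans (Finset.sum_le_sum fun j _ => ?_)
  split_ifs <;> simp

lemma abs_log_Z_le (hq : q ≠ 0) (J : Fin N → Fin N → ℝ) :
    |Real.log (Z q N J)| ≤ N * Real.log q + ∑ i, ∑ j, |J i j| := by
  set S : ℝ := ∑ i, ∑ j, |J i j|
  have log_q_nonneg : 0 ≤ N * Real.log q := by positivity
  have log_pow_mul_exp (s : ℝ) : Real.log (q ^ N * Real.exp s) = N * Real.log q + s := by
    rw [Real.log_mul (by positivity) (by positivity), Real.log_pow, Real.log_exp]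
  have le_Z : q ^ N * Real.exp (-S) ≤ Z q N J := by
    simpa [Z] using Finset.card_nsmul_le_sum Finset.univ (fun σ => Real.exp (-H q N σ J)) _
      fun σ _ => Real.exp_le_exp.mpr (neg_le_neg ((le_abs_self _).trans (abs_H_le σ J)))
  have Z_le : Z q N J ≤ q ^ N * Real.exp S := by
    simpa [Z] using Finset.sum_le_card_nsmul Finset.univ (fun σ => Real.exp (-H q N σ J)) _
      fun σ _ => Real.exp_le_exp.mpr ((neg_le_abs _).trans (abs_H_le σ J))
  have le_log := Real.log_le_log (by positivity) le_Z
  have log_le := Real.log_le_log (Z_pos hq J) Z_le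
  rw [log_pow_mul_exp] at le_log log_le
  rw [abs_le]
  constructor <;> linarith

lemma hasExpGrowth_log_Z (hq : q ≠ 0) (β : ℝ) :
    HasExpGrowth fun J : Fin N × Fin N → ℕ => Real.log (Z q N fun i j => β * (J (i, j) : ℝ)) := by
  refine .of_abs_le_add_mul_sum (A := N * Real.log q) (B := |β|) (by positivity) (abs_nonneg β)
    fun J => (abs_log_Z_le hq _).trans_eq ?_
  simp only [abs_mul, Nat.abs_cast, Fintype.sum_prod_type, Finset.mul_sum]

lemma H_add_single (σ : Fin N → Fin q) (J : Fin N → Fin N → ℝ) (i j : Fin N) (b : ℝ) :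
    H q N σ (J + Pi.single i (Pi.single j b)) = H q N σ J + if σ i = σ j then b else 0 := by
  simp only [H, Pi.add_apply, add_mul, Finset.sum_add_distrib]
  congr 1
  rw [Fintype.sum_eq_single i fun a ha => by simp [ha],
    Fintype.sum_eq_single j fun a ha => by simp [ha]]
  simp

lemma Z_add_single (hq : q ≠ 0) (J : Fin N → Fin N → ℝ) (i j : Fin N) (b : ℝ) :
    Z q N (J + Pi.single i (Pi.single j b)) =
      (1 - (1 - Real.exp (-b)) * gibbsAvg q N J fun σ => if σ i = σ j then 1 else 0) *
        Z q N J := by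
  rw [gibbsAvg, sub_mul, mul_assoc, div_mul_cancel₀ _ (Z_pos hq J).ne', one_mul, Z, Z,
    Finset.mul_sum, ← Finset.sum_sub_distrib]
  refine Finset.sum_congr rfl fun σ _ => ?_
  rw [H_add_single, neg_add, Real.exp_add]
  split_ifs
  · ring
  · simp

lemma log_Z_add_single_sub_log_Z (hq : q ≠ 0) (J : Fin N → Fin N → ℝ) (i j : Fin N) (b : ℝ) :
    Real.log (Z q N (J + Pi.single i (Pi.single j b))) - Real.log (Z q N J) =
      Real.log (1 - (1 - Real.exp (-b)) *
        gibbsAvg q N J fun σ => if σ i = σ j then 1 else 0) := by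
  rw [← Real.log_div (Z_pos hq _).ne' (Z_pos hq _).ne', Z_add_single hq,
    mul_div_cancel_right₀ _ (Z_pos hq J).ne']

lemma mul_natCast_add_single (β : ℝ) (J : Fin N × Fin N → ℕ) (i j : Fin N) :
    (fun a b => β * ((J + Pi.single (i, j) 1 : Fin N × Fin N → ℕ) (a, b) : ℝ)) =
      (fun a b => β * (J (a, b) : ℝ)) + Pi.single i (Pi.single j β) := by
  ext a b
  by_cases ha : a = i <;> by_cases hb : b = j <;> simp [ha, hb, mul_add]

end potts

theorem statement0_general {q N : ℕ} (hq : q ≠ 0) (hN : N ≠ 0) (β : ℝ)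
    {c : ℝ → Fin N → Fin N → ℝ} {c' : Fin N → Fin N → ℝ} {t : ℝ}
    (hderiv : ∀ i j, HasDerivAt (fun s => c s i j) (c' i j) t) :
    HasDerivAt (fun s => potts.pmat q N β (c s))
      ((1 / (2 * (N : ℝ) ^ 2)) * ∑ i, ∑ j, c' i j *
        potts.E N (c t) (fun J => Real.log (1 - (1 - Real.exp (-β)) *
          potts.gibbsAvg q N (fun a b => β * (J a b : ℝ))
            (fun σ => if σ i = σ j then (1 : ℝ) else 0)))) t := by
  have hmeans : HasDerivAt (fun s (a : Fin N × Fin N) => c s a.1 a.2 / (2 * N))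
      (fun a => c' a.1 a.2 / (2 * N)) t :=
    hasDerivAt_pi.mpr fun a => (hderiv a.1 a.2).div_const _
  simp only [potts.pmat_eq_poissonExpectation, potts.E_eq_poissonExpectation]
  refine ((hasDerivAt_poissonExpectation_comp (potts.hasExpGrowth_log_Z hq β)
    hmeans).const_mul (1 / (N : ℝ))).congr_deriv ?_
  simp only [potts.mul_natCast_add_single, potts.log_Z_add_single_sub_log_Z hq,
    Fintype.sum_prod_type, Finset.mul_sum, Function.curry]
  congr! 2
  field_simp

/-- derivative of the quenched pressure along a differentiable
curve of connectivity matrices. -/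
theorem statement0 (q N : ℕ) (hq : 2 ≤ q) (hN : 0 < N) (β : ℝ) (hβ : 0 ≤ β)
    (c c' : ℝ → Fin N → Fin N → ℝ)
    (hpos : ∀ t i j, 0 ≤ c t i j)
    (hderiv : ∀ t i j, HasDerivAt (fun s => c s i j) (c' t i j) t)
    (t : ℝ) :
    HasDerivAt (fun s => potts.pmat q N β (c s))
      ((1 / (2 * (N : ℝ) ^ 2)) * ∑ i, ∑ j, c' t i j *
        potts.E N (c t) (fun J => Real.log (1 - (1 - Real.exp (-β)) *
          potts.gibbsAvg q N (fun a b => β * (J a b : ℝ))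
            (fun σ => if σ i = σ j then (1 : ℝ) else 0)))) t := by
  exact statement0_general (by omega) hN.ne' β (hderiv t)
end

section
/- Let (x_N)_{N∈ℕ} be a real sequence satisfying (M+N) x_{M+N} ≥ M x_M + N x_N for all M, N ∈ ℕ. Then (with values in ℝ ∪ {+∞}) liminf_{N→∞} x_N = limsup_{N→∞} x_N = sup_{N∈ℕ} x_N = limsup_{N→∞} liminf_{M→∞} ((M+N) x_{M+N} − M x_M)/N. -/
open Filter

/-!
Fekete's lemma for the subadditive sequence `-(n * x n)` says that `x` converges to its supremum
`S`. Superadditivity bounds each mean increment `((M + N) x_{M+N} - M x_M) / N` below by `x N`.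
Conversely, if these increments eventually exceed `c`, then `M ↦ M (x_M - c)` is eventually
nondecreasing along steps of length `N`, hence bounded below, so that `liminf x ≥ c`. The inner
liminf therefore lies between `x N` and `S`, and converges to `S`.
-/

open scoped Topology

theorem bddBelow_range_of_eventually_le_add {α : Type*} [Preorder α] [IsCodirectedOrder α]
    {v : ℕ → α} {N : ℕ} (hN : N ≠ 0) (hv : ∀ᶠ M in atTop, v M ≤ v (M + N)) :
    BddBelow (Set.range v) := by
  have : Nonempty α := ⟨v 0⟩
  obtain ⟨A, hA⟩ := eventually_atTop.1 hv
  obtain ⟨B, hB⟩ := ((Set.finite_Iio (A + N)).image v).bddBelow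
  refine ⟨B, Set.forall_mem_range.2 fun n => ?_⟩
  induction n using Nat.strong_induction_on with
  | _ n ih =>
    rcases lt_or_ge n (A + N) with hn | hn
    · exact hB (Set.mem_image_of_mem v hn)
    · calc
        B ≤ v (n - N) := ih (n - N) (by lia)
        _ ≤ v (n - N + N) := hA (n - N) (by lia)
        _ = v n := by rw [Nat.sub_add_cancel (by lia)]

theorem le_liminf_div_of_bddBelow_sub_mul {u : ℕ → ℝ} {c : ℝ}
    (hu : BddBelow (Set.range fun M : ℕ => u M - c * M)) :
    (c : EReal) ≤ liminf (fun M : ℕ => ((u M / M : ℝ) : EReal)) atTop := by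
  obtain ⟨B, hB⟩ := hu
  have tendsto_lower : Tendsto (fun M : ℕ => ((c + B / M : ℝ) : EReal)) atTop (𝓝 (c : EReal)) := by
    refine EReal.tendsto_coe.2 ?_
    simpa only [add_zero] using tendsto_const_nhds.add (tendsto_const_div_atTop_nhds_zero_nat B)
  rw [← tendsto_lower.liminf_eq]
  refine liminf_le_liminf ?_
  filter_upwards [eventually_gt_atTop 0] with M hM
  have hM' : (0 : ℝ) < M := Nat.cast_pos.2 hM
  have lower_le : B ≤ u M - c * M := hB (Set.mem_range_self M)
  rw [EReal.coe_le_coe_iff, le_div_iff₀ hM', add_mul, div_mul_cancel₀ _ hM'.ne']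
  linarith

theorem liminf_sub_div_le_liminf_div (u : ℕ → ℝ) {N : ℕ} (hN : N ≠ 0) :
    liminf (fun M : ℕ => (((u (M + N) - u M) / N : ℝ) : EReal)) atTop
      ≤ liminf (fun M : ℕ => ((u M / M : ℝ) : EReal)) atTop := by
  refine EReal.ge_of_forall_gt_iff_ge.1 fun c hc => ?_
  refine le_liminf_div_of_bddBelow_sub_mul (bddBelow_range_of_eventually_le_add hN ?_)
  filter_upwards [eventually_lt_of_lt_liminf hc] with M hM
  have increment_lt : c * N < u (M + N) - u M :=
    (lt_div_iff₀ (by positivity)).1 (EReal.coe_lt_coe_iff.1 hM)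
  push_cast
  linarith

theorem liminf_increment_le_liminf (x : ℕ → ℝ) {N : ℕ} (hN : N ≠ 0) :
    liminf (fun M : ℕ =>
        (((((M : ℝ) + N) * x (M + N) - (M : ℝ) * x M) / N : ℝ) : EReal)) atTop
      ≤ liminf (fun M => (x M : EReal)) atTop := by
  have mul_div_eventuallyEq :
      (fun M : ℕ => (((M * x M) / M : ℝ) : EReal)) =ᶠ[atTop] fun M => (x M : EReal) := by
    filter_upwards [eventually_ne_atTop 0] with M hM
    rw [mul_div_cancel_left₀ _ (Nat.cast_ne_zero.2 hM)]
  rw [← liminf_congr mul_div_eventuallyEq]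
  simpa only [Nat.cast_add] using liminf_sub_div_le_liminf_div (fun M : ℕ => (M : ℝ) * x M) hN

/-- Superadditivity in the weighted sense: the sequence `n * x n` is superadditive. The value `x 0`
is unconstrained. -/
def WeightedSuperadditive (x : ℕ → ℝ) : Prop :=
  ∀ M N : ℕ, 0 < M → 0 < N → ((M : ℝ) + N) * x (M + N) ≥ (M : ℝ) * x M + (N : ℝ) * x N

namespace WeightedSuperadditive

variable {x : ℕ → ℝ}

theorem subadditive_neg_mul (hx : WeightedSuperadditive x) :
    Subadditive fun n : ℕ => -((n : ℝ) * x n) := by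
  intro M N
  rcases Nat.eq_zero_or_pos M with rfl | hM
  · simp
  rcases Nat.eq_zero_or_pos N with rfl | hN
  · simp
  push_cast
  linarith [hx M N hM hN]

theorem eventually_lt_of_lt (hx : WeightedSuperadditive x) {n : ℕ} (hn : n ≠ 0) {c : ℝ}
    (hc : c < x n) : ∀ᶠ p in atTop, c < x p := by
  have neg_mul_div : ∀ p : ℕ, p ≠ 0 → -((p : ℝ) * x p) / p = -x p := fun p hp => by
    rw [neg_div, mul_div_cancel_left₀ _ (Nat.cast_ne_zero.2 hp)]
  have eventually_div_lt : ∀ᶠ p : ℕ in atTop, -((p : ℝ) * x p) / p < -c :=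
    hx.subadditive_neg_mul.eventually_div_lt_of_div_lt hn <| by
      simpa only [neg_mul_div n hn] using neg_lt_neg hc
  filter_upwards [eventually_div_lt, eventually_ne_atTop 0] with p hp hp0
  rw [neg_mul_div p hp0] at hp
  exact neg_lt_neg_iff.1 hp

theorem tendsto_iSup (hx : WeightedSuperadditive x) :
    Tendsto (fun n => (x n : EReal)) atTop (𝓝 (⨆ n : ℕ, (x (n + 1) : EReal))) := by
  refine tendsto_order.2 ⟨fun a ha => ?_, fun b hb => ?_⟩
  · obtain ⟨n, hn⟩ := lt_iSup_iff.1 ha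
    obtain ⟨c, hac, hcx⟩ := EReal.lt_iff_exists_real_btwn.1 hn
    filter_upwards [hx.eventually_lt_of_lt n.succ_ne_zero (EReal.coe_lt_coe_iff.1 hcx)] with p hp
    exact hac.trans (EReal.coe_lt_coe_iff.2 hp)
  · filter_upwards [eventually_ge_atTop 1] with p hp
    obtain ⟨n, rfl⟩ := Nat.exists_eq_add_of_le' hp
    exact (le_iSup (fun n : ℕ => (x (n + 1) : EReal)) n).trans_lt hb

theorem le_liminf_increment (hx : WeightedSuperadditive x) {N : ℕ} (hN : 0 < N) :
    (x N : EReal) ≤ liminf (fun M : ℕ =>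
      (((((M : ℝ) + N) * x (M + N) - (M : ℝ) * x M) / N : ℝ) : EReal)) atTop := by
  refine le_liminf_of_le (h := ?_)
  filter_upwards [eventually_gt_atTop 0] with M hM
  rw [EReal.coe_le_coe_iff, le_div_iff₀ (Nat.cast_pos.2 hN)]
  linarith [hx M N hM hN]

theorem tendsto_liminf_increment (hx : WeightedSuperadditive x) :
    Tendsto (fun N : ℕ => liminf (fun M : ℕ =>
        (((((M : ℝ) + N) * x (M + N) - (M : ℝ) * x M) / N : ℝ) : EReal)) atTop)
      atTop (𝓝 (⨆ n : ℕ, (x (n + 1) : EReal))) := by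
  refine tendsto_of_tendsto_of_tendsto_of_le_of_le' hx.tendsto_iSup tendsto_const_nhds ?_ ?_
  · filter_upwards [eventually_gt_atTop 0] with N hN using hx.le_liminf_increment hN
  · filter_upwards [eventually_ne_atTop 0] with N hN
    exact (liminf_increment_le_liminf x hN).trans_eq hx.tendsto_iSup.liminf_eq

end WeightedSuperadditive

/-- for a superadditive sequence, the liminf, limsup and supremum
all coincide (in `ℝ ∪ {+∞}`), and are also equal to
`limsup_N liminf_M ((M+N) x_{M+N} - M x_M)/N`. -/
theorem statement2 (x : ℕ → ℝ)
    (hsuper : ∀ M N : ℕ, 0 < M → 0 < N →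
      ((M : ℝ) + N) * x (M + N) ≥ (M : ℝ) * x M + (N : ℝ) * x N) :
    Filter.liminf (fun N => (x N : EReal)) Filter.atTop
        = Filter.limsup (fun N => (x N : EReal)) Filter.atTop ∧
    Filter.limsup (fun N => (x N : EReal)) Filter.atTop
        = ⨆ N : ℕ, (x (N + 1) : EReal) ∧
    (⨆ N : ℕ, (x (N + 1) : EReal)) =
      Filter.limsup (fun N : ℕ =>
        Filter.liminf (fun M : ℕ =>
          (((((M : ℝ) + N) * x (M + N) - (M : ℝ) * x M) / N : ℝ) : EReal))
          Filter.atTop) Filter.atTop := by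
  have hx : WeightedSuperadditive x := hsuper
  exact ⟨hx.tendsto_iSup.liminf_eq.trans hx.tendsto_iSup.limsup_eq.symm,
    hx.tendsto_iSup.limsup_eq, hx.tendsto_liminf_increment.limsup_eq.symm⟩
end
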